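/- Fix an integer n ≥ 2 and reals b₁ > b₂ ≥ … ≥ bₙ > 0. Let r, r' ∈ ℝⁿ be such that rᵢ = r'ᵢ > 0 for all i ∈ {2, …, n} and 0 < r₁ < r'₁. Then τ₁(r) < τ₁(r'); that is, the first zero τ₁ is strictly increasing as a function of the first coordinate r₁ on (0, ∞). -/

import Mathlib

open Real Finset Set

/-- `ψ(τ, r) = Σ_{i=1}^{n} (rᵢ²/2)·(3τ − bᵢτ²·cos(bᵢτ/2)/sin(bᵢτ/2) − sin(bᵢτ)/bᵢ)`. -/
noncomputable def psiSum (n : ℕ) (b r : ℕ → ℝ) (τ : ℝ) : ℝ :=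
  ∑ i ∈ Finset.Icc 1 n, (r i) ^ 2 / 2 *
    (3 * τ - b i * τ ^ 2 * Real.cos (b i * τ / 2) / Real.sin (b i * τ / 2) -
      Real.sin (b i * τ) / b i)

/-!
In the variable `x = bᵢτ/2` every summand of `ψ` is a positive multiple of the same function
`φ x = 3x - 2x² cot x - sin x cos x`. It is positive on `(0, π)`, since `x cot x < 1` and
`sin x cos x < x` there, and the cotangent makes it jump from `+∞` to `-∞` at `π`.

As `b₁` is the strictly largest invariant, its term is the first to meet its pole, at `2π/b₁`.
Between this pole and the next one `q` of `ψ`, the other terms are positive. Since `ψ` tends to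
`-∞` at `2π/b₁` from the right and takes positive values to the left of `q`, it has a zero in
between. At such a zero the first term must be negative, so lowering `r₁` makes `ψ` positive there
and creates a zero further to the left.
-/

open Filter Topology

/-- Up to the factor `rᵢ² / bᵢ`, the `i`-th summand of `psiSum` in the variable `x = bᵢτ/2`;
see `psiSum_summand_eq_mul_conjugateProfile`. -/
noncomputable def conjugateProfile (x : ℝ) : ℝ :=
  3 * x - 2 * x ^ 2 * Real.cot x - Real.sin x * Real.cos x

theorem cot_eq_neg_tan_sub_pi_div_two (x : ℝ) : Real.cot x = -Real.tan (x - π / 2) := by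
  rw [Real.cot_eq_cos_div_sin, Real.tan_eq_sin_div_cos, Real.sin_sub_pi_div_two,
    Real.cos_sub_pi_div_two, neg_div, neg_neg]

theorem tendsto_cot_nhdsLT_pi : Tendsto Real.cot (𝓝[<] π) atBot := by
  have hshift : Tendsto (fun x : ℝ => x + -(π / 2)) (𝓝[<] π) (𝓝[<] (π / 2)) := by
    rw [Tendsto, map_add_right_nhdsLT, show π + -(π / 2) = π / 2 by ring]
  simpa only [Function.comp_def, ← sub_eq_add_neg, ← cot_eq_neg_tan_sub_pi_div_two] using
    tendsto_neg_atTop_atBot.comp (Real.tendsto_tan_pi_div_two.comp hshift)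

theorem tendsto_cot_nhdsGT_pi : Tendsto Real.cot (𝓝[>] π) atTop := by
  have hshift : Tendsto (fun x : ℝ => x + -(π / 2 + π)) (𝓝[>] π) (𝓝[>] (-(π / 2))) := by
    rw [Tendsto, map_add_right_nhdsGT, show π + -(π / 2 + π) = -(π / 2) by ring]
  simpa only [Function.comp_def, ← sub_eq_add_neg, ← sub_sub, Real.tan_sub_pi,
    ← cot_eq_neg_tan_sub_pi_div_two] using
    tendsto_neg_atBot_atTop.comp (Real.tendsto_tan_neg_pi_div_two.comp hshift)

theorem mul_cot_lt_one {x : ℝ} (hx : 0 < x) (hxπ : x < π) : x * Real.cot x < 1 := by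
  rcases lt_or_ge x (π / 2) with h | h
  · have hlt : x < Real.tan x := Real.lt_tan hx h
    rw [← inv_inv (Real.cot x), Real.cot_inv_eq_tan, ← div_eq_mul_inv]
    exact (div_lt_one (hx.trans hlt)).2 hlt
  · have hcot : Real.cot x ≤ 0 := by
      rw [Real.cot_eq_cos_div_sin]
      exact div_nonpos_of_nonpos_of_nonneg
        (Real.cos_nonpos_of_pi_div_two_le_of_le h (by linarith))
        (Real.sin_nonneg_of_nonneg_of_le_pi hx.le hxπ.le)
    exact (mul_nonpos_of_nonneg_of_nonpos hx.le hcot).trans_lt one_pos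

theorem conjugateProfile_pos_of_mul_cot_le_one {x : ℝ} (hx : 0 < x) (h : x * Real.cot x ≤ 1) :
    0 < conjugateProfile x := by
  have hcot : 2 * x ^ 2 * Real.cot x ≤ 2 * x := by
    calc 2 * x ^ 2 * Real.cot x = 2 * x * (x * Real.cot x) := by ring
      _ ≤ 2 * x := mul_le_of_le_one_right (by positivity) h
  have hsin : 2 * Real.sin x * Real.cos x < 2 * x := by
    rw [← Real.sin_two_mul]
    exact Real.sin_lt (by positivity)
  unfold conjugateProfile
  linarith

theorem conjugateProfile_pos {x : ℝ} (hx : 0 < x) (hxπ : x < π) : 0 < conjugateProfile x :=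
  conjugateProfile_pos_of_mul_cot_le_one hx (mul_cot_lt_one hx hxπ).le

theorem conjugateProfile_three_pi_div_two_pos : 0 < conjugateProfile (3 * π / 2) := by
  have hcot : Real.cot (3 * π / 2) = 0 := by
    rw [cot_eq_neg_tan_sub_pi_div_two, show 3 * π / 2 - π / 2 = π by ring, Real.tan_pi, neg_zero]
  exact conjugateProfile_pos_of_mul_cot_le_one (by positivity) (by simp [hcot])

theorem continuousAt_conjugateProfile {x : ℝ} (hx : Real.sin x ≠ 0) :
    ContinuousAt conjugateProfile x := by
  unfold conjugateProfile
  simp only [Real.cot_eq_cos_div_sin]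
  fun_prop (disch := exact hx)

theorem continuousAt_conjugateProfile_mul {a τ : ℝ} (h : Real.sin (a * τ) ≠ 0) :
    ContinuousAt (fun τ => conjugateProfile (a * τ)) τ :=
  (continuousAt_conjugateProfile h).comp (continuous_const_mul a).continuousAt

theorem conjugateProfile_eq_neg_mul_cot_add (x : ℝ) :
    conjugateProfile x = -(2 * x ^ 2 * Real.cot x) + (3 * x - Real.sin x * Real.cos x) := by
  unfold conjugateProfile
  ring

theorem tendsto_conjugateProfile_nhdsGT_pi : Tendsto conjugateProfile (𝓝[>] π) atBot := by
  have hsq : ContinuousWithinAt (fun x : ℝ => 2 * x ^ 2) (Set.Ioi π) π := by fun_prop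
  have hreg : ContinuousWithinAt (fun x : ℝ => 3 * x - Real.sin x * Real.cos x) (Set.Ioi π) π := by
    fun_prop
  have hpole : Tendsto (fun x : ℝ => 2 * x ^ 2 * Real.cot x) (𝓝[>] π) atTop :=
    hsq.tendsto.pos_mul_atTop (by positivity) tendsto_cot_nhdsGT_pi
  rw [funext conjugateProfile_eq_neg_mul_cot_add]
  exact (tendsto_neg_atTop_atBot.comp hpole).atBot_add hreg.tendsto

theorem tendsto_conjugateProfile_nhdsLT_pi : Tendsto conjugateProfile (𝓝[<] π) atTop := by
  have hsq : ContinuousWithinAt (fun x : ℝ => 2 * x ^ 2) (Set.Iio π) π := by fun_prop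
  have hreg : ContinuousWithinAt (fun x : ℝ => 3 * x - Real.sin x * Real.cos x) (Set.Iio π) π := by
    fun_prop
  have hpole : Tendsto (fun x : ℝ => 2 * x ^ 2 * Real.cot x) (𝓝[<] π) atBot :=
    hsq.tendsto.pos_mul_atBot (by positivity) tendsto_cot_nhdsLT_pi
  rw [funext conjugateProfile_eq_neg_mul_cot_add]
  exact (tendsto_neg_atBot_atTop.comp hpole).atTop_add hreg.tendsto

theorem tendsto_conjugateProfile_mul_nhdsGT {a : ℝ} (ha : 0 < a) :
    Tendsto (fun τ => conjugateProfile (a * τ)) (𝓝[>] (π / a)) atBot := by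
  have hscale : Tendsto (fun τ => a * τ) (𝓝[>] (π / a)) (𝓝[>] (a * (π / a))) :=
    (continuous_const_mul a).continuousWithinAt.tendsto_nhdsWithin
      fun _ hτ => mul_lt_mul_of_pos_left hτ ha
  rw [mul_div_cancel₀ π ha.ne'] at hscale
  exact tendsto_conjugateProfile_nhdsGT_pi.comp hscale

theorem tendsto_conjugateProfile_mul_nhdsLT {a : ℝ} (ha : 0 < a) :
    Tendsto (fun τ => conjugateProfile (a * τ)) (𝓝[<] (π / a)) atTop := by
  have hscale : Tendsto (fun τ => a * τ) (𝓝[<] (π / a)) (𝓝[<] (a * (π / a))) :=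
    (continuous_const_mul a).continuousWithinAt.tendsto_nhdsWithin
      fun _ hτ => mul_lt_mul_of_pos_left hτ ha
  rw [mul_div_cancel₀ π ha.ne'] at hscale
  exact tendsto_conjugateProfile_nhdsLT_pi.comp hscale

theorem sin_mul_pos_of_lt_pi_div {a τ : ℝ} (ha : 0 < a) (hτ : 0 < τ) (h : τ < π / a) :
    0 < Real.sin (a * τ) :=
  Real.sin_pos_of_pos_of_lt_pi (mul_pos ha hτ) ((lt_div_iff₀' ha).1 h)

theorem sin_mul_neg_of_lt_two_pi_div {a τ : ℝ} (ha : 0 < a) (h₁ : π / a < τ) (h₂ : τ < 2 * π / a) :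
    Real.sin (a * τ) < 0 := by
  rw [div_lt_iff₀' ha] at h₁
  rw [lt_div_iff₀' ha] at h₂
  rw [← neg_pos, ← Real.sin_sub_pi]
  exact Real.sin_pos_of_pos_of_lt_pi (by linarith) (by linarith)

theorem conjugateProfile_mul_pos {a τ : ℝ} (ha : 0 < a) (hτ : 0 < τ) (h : τ < π / a) :
    0 < conjugateProfile (a * τ) :=
  conjugateProfile_pos (mul_pos ha hτ) ((lt_div_iff₀' ha).1 h)

section DominantFrequency

variable {G : ℝ → ℝ} {a c q : ℝ}

theorem exists_zero_lt_of_pos (ha : 0 < a) (hc : 0 < c) (hG : ContinuousOn G (Set.Ioo 0 q)) {u : ℝ}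
    (hu : u ∈ Set.Ioo (π / a) (min (2 * π / a) q))
    (hpos : 0 < c * conjugateProfile (a * u) + G u) :
    ∃ τ ∈ Set.Ioo (π / a) u, c * conjugateProfile (a * τ) + G τ = 0 := by
  obtain ⟨hpu, hu2, huq⟩ : π / a < u ∧ u < 2 * π / a ∧ u < q := ⟨hu.1, lt_min_iff.1 hu.2⟩
  have hp : 0 < π / a := by positivity
  have hcont : ContinuousOn (fun τ => c * conjugateProfile (a * τ) + G τ) (Set.Ioc (π / a) u) := by
    refine ContinuousOn.add (fun τ hτ => ?_)
      (hG.mono fun τ hτ => ⟨hp.trans hτ.1, hτ.2.trans_lt huq⟩)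
    exact ((continuousAt_conjugateProfile_mul
      (sin_mul_neg_of_lt_two_pi_div ha hτ.1 (hτ.2.trans_lt hu2)).ne).const_mul c).continuousWithinAt
  have hGp : ContinuousAt G (π / a) := hG.continuousAt (Ioo_mem_nhds hp (hpu.trans huq))
  have hbot : Tendsto (fun τ => c * conjugateProfile (a * τ) + G τ) (𝓝[>] (π / a)) atBot :=
    ((tendsto_conjugateProfile_mul_nhdsGT ha).const_mul_atBot hc).atBot_add
      (hGp.tendsto.mono_left nhdsWithin_le_nhds)
  obtain ⟨v, hv, hvu⟩ := ((hbot.eventually_lt_atBot 0).and (Ioo_mem_nhdsGT hpu)).exists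
  obtain ⟨τ, hτ, hzero⟩ := intermediate_value_Ioo hvu.2.le
    (hcont.mono fun τ hτ => ⟨hvu.1.trans_le hτ.1, hτ.2⟩) ⟨hv, hpos⟩
  exact ⟨τ, ⟨hvu.1.trans hτ.1, hτ.2⟩, hzero⟩

theorem exists_pos_before_pole (ha : 0 < a) (hc : 0 < c) (hq : π / a < q)
    (hGpos : ∀ τ ∈ Set.Ioo 0 q, 0 < G τ) (hGtop : Tendsto G (𝓝[<] q) atTop) :
    ∃ u ∈ Set.Ioo (π / a) (min (2 * π / a) q), 0 < c * conjugateProfile (a * u) + G u := by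
  have hp : 0 < π / a := by positivity
  have hpm : π / a < 3 * π / 2 / a := by gcongr; linarith [Real.pi_pos]
  have hm : 3 * π / 2 / a < 2 * π / a := by gcongr; linarith [Real.pi_pos]
  rcases lt_or_ge (3 * π / 2 / a) q with h | h
  · refine ⟨_, ⟨hpm, lt_min hm h⟩, add_pos (mul_pos hc ?_) (hGpos _ ⟨hp.trans hpm, h⟩)⟩
    rw [mul_div_cancel₀ _ ha.ne']
    exact conjugateProfile_three_pi_div_two_pos
  · have hcont : ContinuousAt (fun τ => conjugateProfile (a * τ)) q :=
      continuousAt_conjugateProfile_mul (sin_mul_neg_of_lt_two_pi_div ha hq (h.trans_lt hm)).ne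
    have htop : Tendsto (fun τ => c * conjugateProfile (a * τ) + G τ) (𝓝[<] q) atTop :=
      ((hcont.tendsto.mono_left nhdsWithin_le_nhds).const_mul c).add_atTop hGtop
    obtain ⟨u, hu, hpu, huq⟩ := ((htop.eventually_gt_atTop 0).and (Ioo_mem_nhdsLT hq)).exists
    exact ⟨u, ⟨hpu, lt_min (huq.trans (h.trans_lt hm)) huq⟩, hu⟩

theorem exists_zero_lt_of_zero (ha : 0 < a) (hc : 0 < c) (hq : π / a < q)
    (hG : ContinuousOn G (Set.Ioo 0 q)) (hGpos : ∀ τ ∈ Set.Ioo 0 q, 0 < G τ)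
    (hGtop : Tendsto G (𝓝[<] q) atTop) {c' : ℝ} (hcc' : c < c') {τ' : ℝ} (hτ' : 0 < τ')
    (hsin : Real.sin (a * τ') ≠ 0) (hzero : c' * conjugateProfile (a * τ') + G τ' = 0) :
    ∃ τ ∈ Set.Ioo (π / a) (min (2 * π / a) q),
      c * conjugateProfile (a * τ) + G τ = 0 ∧ τ < τ' := by
  suffices h : ∃ u ∈ Set.Ioo (π / a) (min (2 * π / a) q),
      u ≤ τ' ∧ 0 < c * conjugateProfile (a * u) + G u by
    obtain ⟨u, hu, huτ', hpos⟩ := h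
    obtain ⟨τ, hτ, hτ0⟩ := exists_zero_lt_of_pos ha hc hG hu hpos
    exact ⟨τ, ⟨hτ.1, hτ.2.trans hu.2⟩, hτ0, hτ.2.trans_le huτ'⟩
  obtain ⟨u, hu, hpos⟩ := exists_pos_before_pole ha hc hq hGpos hGtop
  rcases le_or_gt u τ' with huτ' | hτ'u
  · exact ⟨u, hu, huτ', hpos⟩
  have hτ'q : τ' < min (2 * π / a) q := hτ'u.trans hu.2
  have hG' : 0 < G τ' := hGpos τ' ⟨hτ', (lt_min_iff.1 hτ'q).2⟩
  have hneg : conjugateProfile (a * τ') < 0 :=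
    neg_of_mul_neg_right (by linarith) (hc.trans hcc').le
  have hpτ' : π / a < τ' := by
    refine lt_of_le_of_ne (not_lt.1 fun h => ?_) fun h => hsin ?_
    · exact hneg.not_gt (conjugateProfile_mul_pos ha hτ' h)
    · rw [← h, mul_div_cancel₀ π ha.ne', Real.sin_pi]
  have hdrop := mul_lt_mul_of_neg_right hcc' hneg
  exact ⟨τ', ⟨hpτ', hτ'q⟩, le_rfl, by linarith⟩

end DominantFrequency

/-- The part of `psiSum` carried by a finite set `s` of indices, with frequencies `a i = bᵢ / 2`
and weights `w i = rᵢ² / bᵢ`. -/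
noncomputable def profileSum {ι : Type*} (s : Finset ι) (a w : ι → ℝ) (τ : ℝ) : ℝ :=
  ∑ i ∈ s, w i * conjugateProfile (a i * τ)

section ProfileSum

variable {ι : Type*} {s : Finset ι} {a w : ι → ℝ} {j : ι}

theorem lt_pi_div_of_le (hpos : ∀ i ∈ s, 0 < a i) (hmax : ∀ i ∈ s, a i ≤ a j) {τ : ℝ}
    (hτ : τ < π / a j) : ∀ i ∈ s, τ < π / a i := fun i hi =>
  hτ.trans_le (div_le_div_of_nonneg_left Real.pi_pos.le (hpos i hi) (hmax i hi))

theorem profileSum_pos (hs : s.Nonempty) (hpos : ∀ i ∈ s, 0 < a i)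
    (hw : ∀ i ∈ s, 0 < w i) {τ : ℝ} (hτ : 0 < τ) (h : ∀ i ∈ s, τ < π / a i) :
    0 < profileSum s a w τ :=
  Finset.sum_pos (fun i hi => mul_pos (hw i hi) (conjugateProfile_mul_pos (hpos i hi) hτ (h i hi)))
    hs

theorem continuousAt_profileSum {τ : ℝ} (h : ∀ i ∈ s, Real.sin (a i * τ) ≠ 0) :
    ContinuousAt (profileSum s a w) τ :=
  tendsto_finsetSum s fun i hi => (continuousAt_conjugateProfile_mul (h i hi)).const_mul (w i)

theorem tendsto_profileSum_nhdsLT (hj : j ∈ s) (hpos : ∀ i ∈ s, 0 < a i)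
    (hmax : ∀ i ∈ s, a i ≤ a j) (hw : ∀ i ∈ s, 0 < w i) :
    Tendsto (profileSum s a w) (𝓝[<] (π / a j)) atTop := by
  have hq : 0 < π / a j := div_pos Real.pi_pos (hpos j hj)
  refine tendsto_atTop_mono' _ ?_
    ((tendsto_conjugateProfile_mul_nhdsLT (hpos j hj)).const_mul_atTop (hw j hj))
  filter_upwards [Ioo_mem_nhdsLT hq] with τ hτ
  exact Finset.single_le_sum (f := fun i => w i * conjugateProfile (a i * τ)) (fun i hi =>
    (mul_pos (hw i hi) (conjugateProfile_mul_pos (hpos i hi) hτ.1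
      (lt_pi_div_of_le hpos hmax hτ.2 i hi))).le) hj

theorem exists_zero_lt_of_profileSum_zero {a₀ c c' τ' : ℝ} (hs : s.Nonempty)
    (hpos : ∀ i ∈ s, 0 < a i) (hlt : ∀ i ∈ s, a i < a₀) (hw : ∀ i ∈ s, 0 < w i) (hc : 0 < c)
    (hcc' : c < c') (hτ' : 0 < τ') (hsin : Real.sin (a₀ * τ') ≠ 0)
    (hzero : c' * conjugateProfile (a₀ * τ') + profileSum s a w τ' = 0) :
    ∃ τ, 0 < τ ∧ Real.sin (a₀ * τ) ≠ 0 ∧ (∀ i ∈ s, Real.sin (a i * τ) ≠ 0) ∧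
      c * conjugateProfile (a₀ * τ) + profileSum s a w τ = 0 ∧ τ < τ' := by
  obtain ⟨j, hj, hmax⟩ := s.exists_max_image a hs
  have ha₀ : 0 < a₀ := (hpos j hj).trans (hlt j hj)
  have hsin_ne : ∀ τ ∈ Set.Ioo 0 (π / a j), ∀ i ∈ s, Real.sin (a i * τ) ≠ 0 := fun τ hτ i hi =>
    (sin_mul_pos_of_lt_pi_div (hpos i hi) hτ.1 (lt_pi_div_of_le hpos hmax hτ.2 i hi)).ne'
  obtain ⟨τ, ⟨hpτ, hτmin⟩, hτ0, hττ'⟩ := exists_zero_lt_of_zero ha₀ hc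
    (div_lt_div_of_pos_left Real.pi_pos (hpos j hj) (hlt j hj))
    (fun τ hτ => (continuousAt_profileSum (hsin_ne τ hτ)).continuousWithinAt)
    (fun τ hτ => profileSum_pos hs hpos hw hτ.1 (lt_pi_div_of_le hpos hmax hτ.2))
    (tendsto_profileSum_nhdsLT hj hpos hmax hw) hcc' hτ' hsin hzero
  obtain ⟨hτ2, hτq⟩ := lt_min_iff.1 hτmin
  have hτ : 0 < τ := (div_pos Real.pi_pos ha₀).trans hpτ
  exact ⟨τ, hτ, (sin_mul_neg_of_lt_two_pi_div ha₀ hpτ hτ2).ne, hsin_ne τ ⟨hτ, hτq⟩, hτ0, hττ'⟩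

end ProfileSum

theorem psiSum_summand_eq_mul_conjugateProfile {b : ℝ} (hb : b ≠ 0) (r τ : ℝ) :
    r ^ 2 / 2 * (3 * τ - b * τ ^ 2 * Real.cos (b * τ / 2) / Real.sin (b * τ / 2) -
      Real.sin (b * τ) / b) = r ^ 2 / b * conjugateProfile (b / 2 * τ) := by
  have hsin : Real.sin (b * τ) = 2 * Real.sin (b / 2 * τ) * Real.cos (b / 2 * τ) := by
    rw [← Real.sin_two_mul]
    ring_nf
  rw [conjugateProfile, hsin, mul_div_right_comm b τ 2, mul_div_assoc, ← Real.cot_eq_cos_div_sin]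
  field_simp

theorem forall_mem_Icc_one_iff {n : ℕ} (hn : 1 ≤ n) {p : ℕ → Prop} :
    (∀ i ∈ Finset.Icc 1 n, p i) ↔ p 1 ∧ ∀ i ∈ Finset.Icc 2 n, p i := by
  rw [← Finset.insert_Icc_add_one_left_eq_Icc hn, Finset.forall_mem_insert, one_add_one_eq_two]

theorem psiSum_eq_add_profileSum {n : ℕ} (hn : 1 ≤ n) {b : ℕ → ℝ}
    (hb : ∀ i ∈ Finset.Icc 1 n, b i ≠ 0) (r : ℕ → ℝ) (τ : ℝ) :
    psiSum n b r τ = r 1 ^ 2 / b 1 * conjugateProfile (b 1 / 2 * τ) +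
      profileSum (Finset.Icc 2 n) (fun i => b i / 2) (fun i => r i ^ 2 / b i) τ := by
  have hsum : psiSum n b r τ =
      ∑ i ∈ Finset.Icc 1 n, r i ^ 2 / b i * conjugateProfile (b i / 2 * τ) :=
    Finset.sum_congr rfl fun i hi => psiSum_summand_eq_mul_conjugateProfile (hb i hi) (r i) τ
  rw [hsum, ← Finset.insert_Icc_add_one_left_eq_Icc hn, Finset.sum_insert (by simp),
    one_add_one_eq_two, profileSum]

theorem statement12_general {n : ℕ} (hn : 2 ≤ n) {b r r' : ℕ → ℝ}
    (hpos : ∀ i ∈ Finset.Icc 1 n, 0 < b i) (hlt : ∀ i ∈ Finset.Icc 2 n, b i < b 1)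
    (heq : ∀ i ∈ Finset.Icc 2 n, r i = r' i) (hposr : ∀ i ∈ Finset.Icc 2 n, 0 < r i)
    (h1 : 0 < r 1) (h1' : r 1 < r' 1) {τ' : ℝ}
    (hτ' : 0 < τ' ∧ (∀ i ∈ Finset.Icc 1 n, Real.sin (b i * τ' / 2) ≠ 0) ∧ psiSum n b r' τ' = 0) :
    ∃ τ, (0 < τ ∧ (∀ i ∈ Finset.Icc 1 n, Real.sin (b i * τ / 2) ≠ 0) ∧ psiSum n b r τ = 0) ∧
      τ < τ' := by
  have hn1 : 1 ≤ n := one_le_two.trans hn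
  obtain ⟨hb1, hb⟩ := (forall_mem_Icc_one_iff hn1).1 hpos
  have hne : ∀ i ∈ Finset.Icc 1 n, b i ≠ 0 := fun i hi => (hpos i hi).ne'
  have hrest : profileSum (Finset.Icc 2 n) (fun i => b i / 2) (fun i => r' i ^ 2 / b i) τ' =
      profileSum (Finset.Icc 2 n) (fun i => b i / 2) (fun i => r i ^ 2 / b i) τ' :=
    Finset.sum_congr rfl fun i hi => by simp only [heq i hi]
  simp only [mul_div_right_comm _ _ (2 : ℝ), psiSum_eq_add_profileSum hn1 hne,
    forall_mem_Icc_one_iff hn1] at hτ' ⊢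
  obtain ⟨h0, ⟨hsin, -⟩, hzero⟩ := hτ'
  rw [hrest] at hzero
  obtain ⟨τ, hτ, hsin1, hsin2, hτ0, hττ'⟩ := exists_zero_lt_of_profileSum_zero
    (Finset.nonempty_Icc.2 hn) (fun i hi => half_pos (hb i hi))
    (fun i hi => div_lt_div_of_pos_right (hlt i hi) two_pos)
    (fun i hi => div_pos (pow_pos (hposr i hi) 2) (hb i hi)) (div_pos (pow_pos h1 2) hb1)
    (div_lt_div_of_pos_right (pow_lt_pow_left₀ h1' h1.le two_ne_zero) hb1) h0 hsin hzero
  exact ⟨τ, ⟨hτ, ⟨hsin1, hsin2⟩, hτ0⟩, hττ'⟩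

/-- Fix `n ≥ 2` and reals `b₁ > b₂ ≥ … ≥ bₙ > 0`. Let `τ₁(r)`
denote the least `τ > 0` such that `sin(bᵢτ/2) ≠ 0` for all `i` and `ψ(τ, r) = 0`.
If `r, r' ∈ ℝⁿ` satisfy `rᵢ = r'ᵢ > 0` for `i ∈ {2,…,n}` and `0 < r₁ < r'₁`, then
`τ₁(r) < τ₁(r')`: the first zero `τ₁` is strictly increasing in `r₁` on `(0, ∞)`. -/
theorem statement12 (n : ℕ) (hn : 2 ≤ n) (b : ℕ → ℝ)
    (hpos : ∀ i ∈ Finset.Icc 1 n, 0 < b i)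
    (h12 : b 2 < b 1)
    (hanti : ∀ i j, 2 ≤ i → i ≤ j → j ≤ n → b j ≤ b i)
    (tau1 : (ℕ → ℝ) → ℝ)
    (htau1 : ∀ r : ℕ → ℝ, (∀ i ∈ Finset.Icc 1 n, 0 < r i) →
      IsLeast {τ : ℝ | 0 < τ ∧ (∀ i ∈ Finset.Icc 1 n, Real.sin (b i * τ / 2) ≠ 0) ∧
        psiSum n b r τ = 0} (tau1 r))
    (r r' : ℕ → ℝ)
    (heq : ∀ i ∈ Finset.Icc 2 n, r i = r' i)
    (hposr : ∀ i ∈ Finset.Icc 2 n, 0 < r i)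
    (h1 : 0 < r 1) (h1' : r 1 < r' 1) :
    tau1 r < tau1 r' := by
  have hn1 : 1 ≤ n := one_le_two.trans hn
  have hr := (forall_mem_Icc_one_iff hn1).2 ⟨h1, hposr⟩
  have hr' := (forall_mem_Icc_one_iff hn1).2 ⟨h1.trans h1', fun i hi => heq i hi ▸ hposr i hi⟩
  have hlt : ∀ i ∈ Finset.Icc 2 n, b i < b 1 := fun i hi =>
    (hanti 2 i le_rfl (Finset.mem_Icc.1 hi).1 (Finset.mem_Icc.1 hi).2).trans_lt h12
  obtain ⟨τ, hτ, hττ'⟩ := statement12_general hn hpos hlt heq hposr h1 h1' (htau1 r' hr').1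
  exact ((htau1 r hr).2 hτ).trans_lt hττ'
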